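/- arXiv:1404.1569 — 6 statements merged into one kernel-verified Lean document; each statement's English description precedes it below -/
import Mathlib

section
/- Let V be a 3-dimensional real vector space with an almost paracontact structure (φ, ξ, η) and a compatible nondegenerate metric g. Then there exists a vector e₁ ∈ V such that (e₁, φe₁, ξ) is a basis of V which is pairwise g-orthogonal and satisfies g(e₁, e₁) = 1, g(φe₁, φe₁) = −1 and g(ξ, ξ) = 1 (a φ-basis; in particular g has signature (2,1)). -/
/-!
Since `φ ξ = 0` and `η ∘ φ = 0`, compatibility gives `g(·, ξ) = η` and makes `φ` skew for `g`.
The symmetric form `g - η ⊗ η` is then nonzero by nondegeneracy, so away from characteristic 2 it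
is nonzero on some diagonal pair `(X, X)`, where its value is `-g(φX, φX)`. Thus `Y = φX` lies in
`ker η` and is not isotropic. The plane spanned by `Y` and `φY` is hyperbolic,
`g(aY + bφY, aY + bφY) = (a² - b²) g(Y, Y)`, so it represents `1` without extracting square roots.
-/

/-- An almost paracontact structure `(φ, ξ, η)`, here on a module over any commutative ring: on
`ker η` the map `φ` is an involution. No condition is put on the dimensions of its eigenspaces. -/
structure IsAlmostParacontact {R V : Type*} [CommRing R] [AddCommGroup V] [Module R V]
    (φ : V →ₗ[R] V) (ξ : V) (η : V →ₗ[R] R) : Prop where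
  phi_phi (X : V) : φ (φ X) = X - η X • ξ
  eta_xi : η ξ = 1

/-- An almost paracontact structure `(φ, ξ, η)` together with a compatible metric `g`. The form `g`
may be degenerate; nondegeneracy is expressed separately by `g.SeparatingLeft`. -/
structure IsAlmostParacontactMetric {R V : Type*} [CommRing R] [AddCommGroup V] [Module R V]
    (φ : V →ₗ[R] V) (ξ : V) (η : V →ₗ[R] R) (g : LinearMap.BilinForm R V) : Prop
    extends IsAlmostParacontact φ ξ η where
  isSymm : g.IsSymm
  apply_phi_phi (X Y : V) : g (φ X) (φ Y) = -g X Y + η X * η Y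

namespace IsAlmostParacontact

variable {R V : Type*} [CommRing R] [AddCommGroup V] [Module R V]
  {φ : V →ₗ[R] V} {ξ : V} {η : V →ₗ[R] R}

-- Both sides come from expanding `φ³ X` in the two possible ways.
theorem eta_smul_phi_xi (h : IsAlmostParacontact φ ξ η) (X : V) : η X • φ ξ = η (φ X) • ξ := by
  have hcube : φ X - η X • φ ξ = φ X - η (φ X) • ξ := by
    rw [← map_smul, ← map_sub, ← h.phi_phi, h.phi_phi (φ X)]
  exact sub_right_injective hcube

theorem phi_xi [IsReduced R] (h : IsAlmostParacontact φ ξ η) : φ ξ = 0 := by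
  have hphi : φ ξ = η (φ ξ) • ξ := by
    simpa only [h.eta_xi, one_smul] using h.eta_smul_phi_xi ξ
  have hphi_phi : φ (φ ξ) = 0 := by
    rw [h.phi_phi, h.eta_xi, one_smul, sub_self]
  have hsq : η (φ ξ) ^ 2 = 0 := by
    simpa only [sq, hphi_phi, map_smul, map_zero, zero_smul, smul_eq_mul] using
      congrArg η (h.eta_smul_phi_xi (φ ξ))
  rw [hphi, eq_zero_of_pow_eq_zero hsq, zero_smul]

theorem eta_phi [IsReduced R] (h : IsAlmostParacontact φ ξ η) (X : V) : η (φ X) = 0 := by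
  simpa only [h.phi_xi, smul_zero, map_zero, map_smul, h.eta_xi, smul_eq_mul, mul_one] using
    (congrArg η (h.eta_smul_phi_xi X)).symm

end IsAlmostParacontact

namespace IsAlmostParacontactMetric

section IsReduced

variable {R V : Type*} [CommRing R] [IsReduced R] [AddCommGroup V] [Module R V]
  {φ : V →ₗ[R] V} {ξ : V} {η : V →ₗ[R] R} {g : LinearMap.BilinForm R V}

theorem apply_xi (h : IsAlmostParacontactMetric φ ξ η g) (X : V) : g X ξ = η X := by
  have hcompat := h.apply_phi_phi X ξ
  rw [h.phi_xi, map_zero, h.eta_xi, mul_one] at hcompat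
  linear_combination hcompat

theorem apply_phi_left (h : IsAlmostParacontactMetric φ ξ η g) (X Y : V) :
    g (φ X) Y = -g X (φ Y) := by
  calc g (φ X) Y = g (φ X) (φ (φ Y)) := by
        rw [h.phi_phi, map_sub, map_smul, h.apply_xi, h.eta_phi, smul_zero, sub_zero]
    _ = -g X (φ Y) := by rw [h.apply_phi_phi, h.eta_phi, mul_zero, add_zero]

end IsReduced

variable {K V : Type*} [Field K] [NeZero (2 : K)] [AddCommGroup V] [Module K V]
  {φ : V →ₗ[K] V} {ξ : V} {η : V →ₗ[K] K} {g : LinearMap.BilinForm K V}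

theorem apply_self_phi (h : IsAlmostParacontactMetric φ ξ η g) (X : V) : g X (φ X) = 0 := by
  have hskew : g X (φ X) = -g X (φ X) := (h.isSymm.eq X (φ X)).trans (h.apply_phi_left X X)
  have htwo : 2 * g X (φ X) = 0 := by linear_combination hskew
  exact (mul_eq_zero_iff_left two_ne_zero).mp htwo

theorem exists_eta_eq_zero_apply_self_ne_zero (h : IsAlmostParacontactMetric φ ξ η g)
    (hg : g.SeparatingLeft) (hη : LinearMap.ker η ≠ ⊥) : ∃ X, η X = 0 ∧ g X X ≠ 0 := by
  let B := g - LinearMap.BilinForm.linMulLin η η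
  have hB_symm : LinearMap.IsSymm B := ⟨fun X Y => by simp [B, h.isSymm.eq X Y, mul_comm]⟩
  have hB_ne : B ≠ 0 := by
    intro hB
    obtain ⟨X, hX, hX_ne⟩ := Submodule.exists_mem_ne_zero_of_ne_bot hη
    refine hX_ne (hg X fun Y => ?_)
    simpa [B, LinearMap.mem_ker.mp hX] using LinearMap.congr_fun₂ hB X Y
  let : Invertible (2 : K) := invertibleOfNonzero two_ne_zero
  obtain ⟨X, hX⟩ := LinearMap.BilinForm.exists_bilinForm_self_ne_zero hB_ne hB_symm
  have hphi : g (φ X) (φ X) = -B X X := by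
    simp [B, h.apply_phi_phi, neg_add_eq_sub]
  exact ⟨φ X, h.eta_phi X, hphi ▸ neg_ne_zero.mpr hX⟩

theorem apply_smul_add_smul_phi_self (h : IsAlmostParacontactMetric φ ξ η g) {X : V}
    (hX : η X = 0) (a b : K) :
    g (a • X + b • φ X) (a • X + b • φ X) = (a ^ 2 - b ^ 2) * g X X := by
  simp only [map_add, map_smul, LinearMap.add_apply, LinearMap.smul_apply, smul_eq_mul,
    h.apply_self_phi, ← h.isSymm.eq X (φ X), h.apply_phi_phi, hX]
  ring

theorem exists_eta_eq_zero_apply_self_eq_one (h : IsAlmostParacontactMetric φ ξ η g)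
    (hg : g.SeparatingLeft) (hη : LinearMap.ker η ≠ ⊥) : ∃ e, η e = 0 ∧ g e e = 1 := by
  obtain ⟨X, hX, hX_ne⟩ := h.exists_eta_eq_zero_apply_self_ne_zero hg hη
  -- `a + b = 1` and `a - b = (g X X)⁻¹`.
  let a := (1 + (g X X)⁻¹) / 2
  let b := (1 - (g X X)⁻¹) / 2
  have hab : a ^ 2 - b ^ 2 = (g X X)⁻¹ := by
    have : (2 : K) ≠ 0 := two_ne_zero
    simp only [a, b]
    field_simp
    ring
  refine ⟨a • X + b • φ X, ?_, ?_⟩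
  · simp only [map_add, map_smul, hX, h.eta_phi, smul_zero, add_zero]
  · rw [h.apply_smul_add_smul_phi_self hX, hab, inv_mul_cancel₀ hX_ne]

theorem isOrthoᵢ_phi_xi (h : IsAlmostParacontactMetric φ ξ η g) {e : V} (he : η e = 0) :
    g.IsOrthoᵢ ![e, φ e, ξ] := by
  have heφ := h.apply_self_phi e
  have heξ : g e ξ = 0 := (h.apply_xi e).trans he
  have hφξ : g (φ e) ξ = 0 := (h.apply_xi (φ e)).trans (h.eta_phi e)
  rw [LinearMap.isOrthoᵢ_def]
  intro i j hij
  fin_cases i <;> fin_cases j <;>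
    simp_all [← h.isSymm.eq e (φ e), ← h.isSymm.eq e ξ, ← h.isSymm.eq (φ e) ξ]

end IsAlmostParacontactMetric

theorem almost_paracontact_metric_phi_basis_general
    {K V : Type*} [Field K] [NeZero (2 : K)] [AddCommGroup V] [Module K V]
    (hdim : Module.finrank K V = 3)
    {φ : V →ₗ[K] V} {ξ : V} {η : V →ₗ[K] K} {g : LinearMap.BilinForm K V}
    (h : IsAlmostParacontactMetric φ ξ η g) (hg : g.SeparatingLeft) :
    ∃ e₁ : V,
      LinearIndependent K ![e₁, φ e₁, ξ] ∧
      Submodule.span K {e₁, φ e₁, ξ} = ⊤ ∧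
      g e₁ (φ e₁) = 0 ∧ g e₁ ξ = 0 ∧ g (φ e₁) ξ = 0 ∧
      g e₁ e₁ = 1 ∧ g (φ e₁) (φ e₁) = -1 ∧ g ξ ξ = 1 := by
  have : FiniteDimensional K V := .of_finrank_pos (by omega)
  have hη : LinearMap.ker η ≠ ⊥ := LinearMap.ker_ne_bot_of_finrank_lt (by simp [hdim])
  obtain ⟨e, he, hee⟩ := h.exists_eta_eq_zero_apply_self_eq_one hg hη
  have hφφ : g (φ e) (φ e) = -1 := by rw [h.apply_phi_phi, hee, he, mul_zero, add_zero]
  have hξξ : g ξ ξ = 1 := (h.apply_xi ξ).trans h.eta_xi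
  have hortho := h.isOrthoᵢ_phi_xi he
  have hli : LinearIndependent K ![e, φ e, ξ] :=
    LinearMap.linearIndependent_of_isOrthoᵢ hortho <| by
      simp [Fin.forall_fin_succ, hee, hφφ, hξξ]
  have hspan := hli.span_eq_top_of_card_eq_finrank (by simp [hdim])
  rw [Matrix.range_cons, Matrix.range_cons_cons_empty, Set.singleton_union] at hspan
  rw [LinearMap.isOrthoᵢ_def] at hortho
  exact ⟨e, hli, hspan, hortho 0 1 (by decide), hortho 0 2 (by decide), hortho 1 2 (by decide),
    hee, hφφ, hξξ⟩

/-- A 3-dimensional real vector space with an almost paracontact structure `(φ, ξ, η)`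
and a compatible nondegenerate metric `g` admits a `φ`-basis: a vector `e₁` such that
`(e₁, φ e₁, ξ)` is a pairwise `g`-orthogonal basis with `g(e₁,e₁) = 1`,
`g(φ e₁, φ e₁) = -1` and `g(ξ,ξ) = 1`. -/
theorem almost_paracontact_metric_phi_basis
    {V : Type*} [AddCommGroup V] [Module ℝ V] [FiniteDimensional ℝ V]
    (hdim : Module.finrank ℝ V = 3)
    (φ : V →ₗ[ℝ] V) (ξ : V) (η : V →ₗ[ℝ] ℝ)
    (hφ : ∀ X : V, φ (φ X) = X - η X • ξ)
    (hηξ : η ξ = 1)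
    (g : V →ₗ[ℝ] V →ₗ[ℝ] ℝ)
    (hgsymm : ∀ X Y : V, g X Y = g Y X)
    (hcompat : ∀ X Y : V, g (φ X) (φ Y) = -(g X Y) + η X * η Y)
    (hgnd : ∀ X : V, (∀ Y : V, g X Y = 0) → X = 0) :
    ∃ e₁ : V,
      LinearIndependent ℝ ![e₁, φ e₁, ξ] ∧
      Submodule.span ℝ {e₁, φ e₁, ξ} = ⊤ ∧
      g e₁ (φ e₁) = 0 ∧ g e₁ ξ = 0 ∧ g (φ e₁) ξ = 0 ∧
      g e₁ e₁ = 1 ∧ g (φ e₁) (φ e₁) = -1 ∧ g ξ ξ = 1 := by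
  exact almost_paracontact_metric_phi_basis_general hdim
    ⟨⟨hφ, hηξ⟩, ⟨hgsymm⟩, hcompat⟩ hgnd
end

section
/- Let V be a 3-dimensional real vector space, g a nondegenerate symmetric bilinear form on V, and R : V × V → End(V) a trilinear map whose associated (0,4)-tensor R̃(X,Y,Z,W) := g(R(X,Y)Z, W) satisfies the curvature symmetries R̃(X,Y,Z,W) = −R̃(Y,X,Z,W), R̃(X,Y,Z,W) = R̃(Z,W,X,Y), and the first Bianchi identity R̃(X,Y,Z,W) + R̃(Y,Z,X,W) + R̃(Z,X,Y,W) = 0. Define Ric(X,Y) := trace of the linear map Z ↦ R(Z,X)Y, let S : V → V be the unique linear map with g(SX, Y) = Ric(X,Y) for all X, Y, and set τ := trace(S). Then for all X, Y, Z, W ∈ V: R̃(X,Y,Z,W) = g(X,W)Ric(Y,Z) − g(X,Z)Ric(Y,W) + g(Y,Z)Ric(X,W) − g(Y,W)Ric(X,Z) − (τ/2)(g(Y,Z)g(X,W) − g(X,Z)g(Y,W)). (In dimension 3 the curvature tensor is determined by the Ricci tensor and the scalar curvature.) -/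
/-!
A symmetric operator `A` determines the curvature-like tensor
`R_A(X, Y)Z = g(Y, Z) A X - g(X, Z) A Y + g(A Y, Z) X - g(A X, Z) Y`, the Kulkarni–Nomizu product of
`g` with the form `g(A ·, ·)`. Its Ricci tensor is `tr(A) g + (n - 2) g(A ·, ·)`, so the Schouten
operator, a combination of the Ricci operator and the identity, is the choice of `A` for which `R_A`
has the same Ricci tensor as `R`. The difference `R - R_A`, the Weyl tensor, is then Ricci-flat.

In dimension three a Ricci-flat tensor `T` vanishes. Indeed two planes spanned by vectors of an
orthogonal basis share one of these vectors, so up to sign the components of `T` have the form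
`T(eᵢ, eⱼ, eₖ, eᵢ)`. For distinct indices this is a multiple of `Ric(eⱼ, eₖ)`, while for `j = k` it
is a multiple of a sectional curvature; the sectional curvatures of the three coordinate planes add
up to zero in pairs, so all three are zero.
-/

open Module
open LinearMap (BilinForm IsAdjointPair trace trace_smulRight trace_id trace_conj' trace_transpose')

section CommRing

variable {K V : Type*} [CommRing K] [AddCommGroup V] [Module K V]

/-- The Ricci contraction `(X, Y) ↦ tr (Z ↦ R(Z, X)Y)` of a trilinear map `R`. -/
noncomputable def ricci (R : V →ₗ[K] V →ₗ[K] V →ₗ[K] V) : BilinForm K V :=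
  (LinearMap.lflip (R₀ := K).toLinearMap ∘ₗ R.flip).compr₂ (trace K V)

theorem ricci_apply (R : V →ₗ[K] V →ₗ[K] V →ₗ[K] V) (X Y : V) :
    ricci R X Y = trace K V ((R.flip X).flip Y) :=
  rfl

theorem ricci_sub (R R' : V →ₗ[K] V →ₗ[K] V →ₗ[K] V) : ricci (R - R') = ricci R - ricci R' := by
  ext X Y
  exact map_sub (trace K V) ((R.flip X).flip Y) ((R'.flip X).flip Y)

/-- The `(0,4)`-tensor `g(R(X, Y)Z, W)` is a symmetric bilinear form on bivectors, evaluated on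
`X ∧ Y` and `Z ∧ W`. Curvature-like tensors are the forms of this kind satisfying the first Bianchi
identity. -/
structure IsBivectorForm (g : BilinForm K V) (R : V →ₗ[K] V →ₗ[K] V →ₗ[K] V) : Prop where
  antisymm : ∀ X Y Z W, g (R X Y Z) W = -g (R Y X Z) W
  pair_symm : ∀ X Y Z W, g (R X Y Z) W = g (R Z W X) Y

namespace IsBivectorForm

variable {g : BilinForm K V} {R R' : V →ₗ[K] V →ₗ[K] V →ₗ[K] V}

theorem sub (hR : IsBivectorForm g R) (hR' : IsBivectorForm g R') : IsBivectorForm g (R - R') where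
  antisymm X Y Z W := by
    simp only [LinearMap.sub_apply, map_sub, hR.antisymm X Y, hR'.antisymm X Y]
    ring
  pair_symm X Y Z W := by
    simp only [LinearMap.sub_apply, map_sub, hR.pair_symm X Y, hR'.pair_symm X Y]

theorem antisymm_right (hR : IsBivectorForm g R) (X Y Z W : V) :
    g (R X Y Z) W = -g (R X Y W) Z := by
  rw [hR.pair_symm, hR.antisymm, hR.pair_symm]

theorem swap (hR : IsBivectorForm g R) (X Y Z W : V) : g (R X Y Z) W = g (R Y X W) Z := by
  rw [hR.antisymm, hR.antisymm_right, neg_neg]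

end IsBivectorForm

/-- The Kulkarni–Nomizu product of `g` with the bilinear form `g(A ·, ·)`, as a `(1,3)`-tensor. -/
def kulkarniNomizu (g : BilinForm K V) (A : End K V) : V →ₗ[K] V →ₗ[K] V →ₗ[K] V :=
  LinearMap.mk₂ K
    (fun X Y ↦ (g Y).smulRight (A X) - (g X).smulRight (A Y)
      + (g (A Y)).smulRight X - (g (A X)).smulRight Y)
    (fun _ _ _ ↦ by ext; simp; module) (fun _ _ _ ↦ by ext; simp; module)
    (fun _ _ _ ↦ by ext; simp; module) (fun _ _ _ ↦ by ext; simp; module)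

theorem kulkarniNomizu_apply (g : BilinForm K V) (A : End K V) (X Y Z : V) :
    kulkarniNomizu g A X Y Z = g Y Z • A X - g X Z • A Y + g (A Y) Z • X - g (A X) Z • Y :=
  rfl

theorem isBivectorForm_kulkarniNomizu {g : BilinForm K V} {A : End K V} (hg : g.IsSymm)
    (hA : g.IsSelfAdjoint A) : IsBivectorForm g (kulkarniNomizu g A) where
  antisymm X Y Z W := by
    simp only [kulkarniNomizu_apply, map_add, map_sub, map_smul, LinearMap.add_apply,
      LinearMap.sub_apply, LinearMap.smul_apply, smul_eq_mul]
    ring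
  pair_symm X Y Z W := by
    have hA_symm (U U' : V) : g (A U) U' = g (A U') U := (hA U U').trans (hg.eq _ _)
    simp only [kulkarniNomizu_apply, map_add, map_sub, map_smul, LinearMap.add_apply,
      LinearMap.sub_apply, LinearMap.smul_apply, smul_eq_mul, hg.eq Z, hg.eq W, hA_symm Z,
      hA_symm W]
    ring

theorem ricci_kulkarniNomizu [Module.Free K V] [Module.Finite K V] (g : BilinForm K V)
    (A : End K V) :
    ricci (kulkarniNomizu g A) = trace K V A • g + ((finrank K V : K) - 2) • g ∘ₗ A := by
  ext X Y
  have endomorphism_eq : ((kulkarniNomizu g A).flip X).flip Y =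
      g X Y • A - (g.flip Y).smulRight (A X) + g (A X) Y • LinearMap.id
        - (g.flip Y ∘ₗ A).smulRight X :=
    rfl
  rw [ricci_apply, endomorphism_eq]
  simp only [map_add, map_sub, map_smul, trace_smulRight, trace_id, LinearMap.comp_apply,
    BilinForm.flip_apply, LinearMap.add_apply, LinearMap.smul_apply, smul_eq_mul]
  ring

end CommRing

section Field

variable {K V : Type*} [Field K] [AddCommGroup V] [Module K V]

theorem trace_eq_of_isAdjointPair [FiniteDimensional K V] {g : BilinForm K V}
    (hg : g.Nondegenerate) {f f' : End K V} (h : IsAdjointPair g g f f') :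
    trace K V f = trace K V f' := by
  have transpose_eq : (g.toDual hg).conj f = Dual.transpose f' := by
    ext φ X
    obtain ⟨Y, rfl⟩ := (g.toDual hg).surjective φ
    simpa [LinearEquiv.conj_apply, Dual.transpose_apply, BilinForm.toDual_def] using h Y X
  rw [← trace_conj' f (g.toDual hg), transpose_eq, trace_transpose']

theorem IsBivectorForm.ricci_isSymm [FiniteDimensional K V] {g : BilinForm K V} (hg : g.IsSymm)
    (hg' : g.Nondegenerate) {R : V →ₗ[K] V →ₗ[K] V →ₗ[K] V} (hR : IsBivectorForm g R) :
    (ricci R).IsSymm where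
  eq X Y := trace_eq_of_isAdjointPair hg' fun Z W ↦ by
    calc g (R Z X Y) W = g (R W Y X) Z := by rw [hR.pair_symm, hR.swap]
      _ = g Z (R W Y X) := hg.eq _ _

/-- The Schouten operator attached to the Ricci operator `S` in dimension `n`, normalised so that
its Kulkarni–Nomizu product with `g` has Ricci operator `S`. Its value is junk when `n - 2` or
`2 * (n - 1)` vanishes in `K`. -/
noncomputable def schouten (S : End K V) : End K V :=
  ((finrank K V : K) - 2)⁻¹ • (S - (trace K V S / (2 * ((finrank K V : K) - 1))) • LinearMap.id)

theorem isSelfAdjoint_schouten {g : BilinForm K V} {S : End K V} (hS : g.IsSelfAdjoint S) :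
    g.IsSelfAdjoint (schouten S) := fun X Y ↦ by
  simp [schouten, hS X Y]

theorem ricci_kulkarniNomizu_schouten [NeZero (2 : K)] [FiniteDimensional K V]
    (h₁ : (finrank K V : K) ≠ 1) (h₂ : (finrank K V : K) ≠ 2)
    (g : BilinForm K V) (S : End K V) :
    ricci (kulkarniNomizu g (schouten S)) = g ∘ₗ S := by
  have h₁' := sub_ne_zero.mpr h₁
  have h₂' := sub_ne_zero.mpr h₂
  have h_two : (2 : K) ≠ 0 := two_ne_zero
  ext X Y
  simp only [ricci_kulkarniNomizu, schouten, map_sub, map_smul, trace_id, LinearMap.add_apply,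
    LinearMap.smul_apply, LinearMap.sub_apply, LinearMap.comp_apply, LinearMap.id_apply,
    smul_eq_mul]
  field_simp
  ring

section OrthogonalBasis

variable {ι : Type*} {g : BilinForm K V} {e : Basis ι K V}

theorem repr_eq_div_of_isOrthoᵢ (hg : g.Nondegenerate) (he : g.IsOrthoᵢ e) (X : V) (i : ι) :
    e.repr X i = g X (e i) / g (e i) (e i) := by
  have smul_coord_eq : g (e i) (e i) • e.coord i = LinearMap.flip g (e i) := e.ext fun j ↦ by
    obtain rfl | hji := eq_or_ne j i
    · simp
    · have orthogonal : g (e j) (e i) = 0 := he hji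
      simp [hji, orthogonal]
  rw [eq_div_iff (he.not_isOrtho_basis_self_of_separatingLeft hg.1 i), mul_comm]
  exact LinearMap.congr_fun smul_coord_eq X

theorem trace_eq_sum_div_of_isOrthoᵢ [Fintype ι] (hg : g.Nondegenerate) (he : g.IsOrthoᵢ e)
    (f : End K V) :
    trace K V f = ∑ i, g (f (e i)) (e i) / g (e i) (e i) := by
  classical
  simp [LinearMap.trace_eq_matrix_trace K e, Matrix.trace, LinearMap.toMatrix_apply,
    repr_eq_div_of_isOrthoᵢ hg he]

theorem ricci_eq_sum_div_of_isOrthoᵢ [Fintype ι] (hg : g.Nondegenerate) (he : g.IsOrthoᵢ e)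
    (R : V →ₗ[K] V →ₗ[K] V →ₗ[K] V) (X Y : V) :
    ricci R X Y = ∑ i, g (R (e i) X Y) (e i) / g (e i) (e i) :=
  trace_eq_sum_div_of_isOrthoᵢ hg he _

end OrthogonalBasis

variable [NeZero (2 : K)]

theorem IsBivectorForm.apply_self {g : BilinForm K V} {R : V →ₗ[K] V →ₗ[K] V →ₗ[K] V}
    (hR : IsBivectorForm g R) (X Z W : V) : g (R X X Z) W = 0 := by
  have two_mul_eq : 2 * g (R X X Z) W = 0 := by linear_combination hR.antisymm X X Z W
  exact (mul_eq_zero.mp two_mul_eq).resolve_left two_ne_zero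

theorem IsBivectorForm.apply_self_right {g : BilinForm K V} {R : V →ₗ[K] V →ₗ[K] V →ₗ[K] V}
    (hR : IsBivectorForm g R) (X Y Z : V) : g (R X Y Z) Z = 0 := by
  rw [hR.pair_symm, hR.apply_self]

theorem sum_univ_fin_three_of_ne {M : Type*} [AddCommMonoid M] {i j k : Fin 3} (hij : i ≠ j)
    (hik : i ≠ k) (hjk : j ≠ k) (f : Fin 3 → M) : ∑ m, f m = f i + f j + f k := by
  have univ_eq : (Finset.univ : Finset (Fin 3)) = {i, j, k} := by decide +revert
  rw [univ_eq, Finset.sum_insert (by simp [hij, hik]), Finset.sum_pair hjk, add_assoc]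

theorem exists_basis_fin_isOrthoᵢ [FiniteDimensional K V] {n : ℕ} (hdim : finrank K V = n)
    {g : BilinForm K V} (hg : g.IsSymm) : ∃ e : Basis (Fin n) K V, g.IsOrthoᵢ e := by
  have : Invertible (2 : K) := invertibleOfNonzero two_ne_zero
  subst hdim
  exact BilinForm.exists_orthogonal_basis (B := g) ⟨hg.eq⟩

namespace IsBivectorForm

variable {g : BilinForm K V} {R : V →ₗ[K] V →ₗ[K] V →ₗ[K] V} {e : Basis (Fin 3) K V}

theorem ricci_eq_div_of_ne (hR : IsBivectorForm g R) (hg : g.Nondegenerate) (he : g.IsOrthoᵢ e)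
    {i j k : Fin 3} (hij : i ≠ j) (hik : i ≠ k) (hjk : j ≠ k) :
    ricci R (e j) (e k) = g (R (e i) (e j) (e k)) (e i) / g (e i) (e i) := by
  rw [ricci_eq_sum_div_of_isOrthoᵢ hg he, sum_univ_fin_three_of_ne hij hik hjk, hR.apply_self,
    hR.apply_self_right, zero_div, zero_div, add_zero, add_zero]

theorem ricci_self_eq_div_add_div (hR : IsBivectorForm g R) (hg : g.Nondegenerate)
    (he : g.IsOrthoᵢ e) {i j k : Fin 3} (hij : i ≠ j) (hik : i ≠ k) (hjk : j ≠ k) :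
    ricci R (e j) (e j) = g (R (e i) (e j) (e j)) (e i) / g (e i) (e i)
      + g (R (e k) (e j) (e j)) (e k) / g (e k) (e k) := by
  rw [ricci_eq_sum_div_of_isOrthoᵢ hg he, sum_univ_fin_three_of_ne hij hik hjk, hR.apply_self,
    zero_div, add_zero]

theorem sectional_eq_zero_of_ricci_eq_zero (hR : IsBivectorForm g R) (hg : g.Nondegenerate)
    (he : g.IsOrthoᵢ e) (hRic : ricci R = 0) {i j k : Fin 3} (hij : i ≠ j) (hik : i ≠ k)
    (hjk : j ≠ k) : g (R (e i) (e j) (e j)) (e i) = 0 := by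
  have norm_ne_zero := he.not_isOrtho_basis_self_of_separatingLeft hg.1
  have hi : g (e i) (e i) ≠ 0 := norm_ne_zero i
  have hj : g (e j) (e j) ≠ 0 := norm_ne_zero j
  have hk : g (e k) (e k) ≠ 0 := norm_ne_zero k
  have ricci_i := hR.ricci_self_eq_div_add_div hg he hij.symm hjk hik
  have ricci_j := hR.ricci_self_eq_div_add_div hg he hij hik hjk
  have ricci_k := hR.ricci_self_eq_div_add_div hg he hik hij hjk.symm
  rw [hRic, LinearMap.zero_apply, LinearMap.zero_apply] at ricci_i ricci_j ricci_k
  rw [hR.swap (e j), hR.swap (e k)] at ricci_i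
  rw [hR.swap (e k)] at ricci_j
  field_simp at ricci_i ricci_j ricci_k
  have two_mul_eq : 2 * (g (R (e i) (e j) (e j)) (e i) * g (e k) (e k)) = 0 := by
    linear_combination ricci_k - ricci_i - ricci_j
  simpa [two_ne_zero, hk] using two_mul_eq

theorem apply_shared_eq_zero_of_ricci_eq_zero (hR : IsBivectorForm g R) (hg : g.Nondegenerate)
    (he : g.IsOrthoᵢ e) (hRic : ricci R = 0) (i j k : Fin 3) :
    g (R (e i) (e j) (e k)) (e i) = 0 := by
  obtain rfl | hij := eq_or_ne i j
  · exact hR.apply_self _ _ _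
  obtain rfl | hik := eq_or_ne i k
  · exact hR.apply_self_right _ _ _
  obtain rfl | hjk := eq_or_ne j k
  · obtain ⟨k, hik, hjk⟩ : ∃ k, i ≠ k ∧ j ≠ k := by decide +revert
    exact hR.sectional_eq_zero_of_ricci_eq_zero hg he hRic hij hik hjk
  · have ricci_eq_div := hR.ricci_eq_div_of_ne hg he hij hik hjk
    rw [hRic, LinearMap.zero_apply, LinearMap.zero_apply] at ricci_eq_div
    exact (div_eq_zero_iff.mp ricci_eq_div.symm).resolve_right
      (he.not_isOrtho_basis_self_of_separatingLeft hg.1 i)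

theorem apply_basis_eq_zero_of_ricci_eq_zero (hR : IsBivectorForm g R) (hg : g.Nondegenerate)
    (he : g.IsOrthoᵢ e) (hRic : ricci R = 0) (i j k l : Fin 3) :
    g (R (e i) (e j) (e k)) (e l) = 0 := by
  have shared := hR.apply_shared_eq_zero_of_ricci_eq_zero hg he hRic
  obtain rfl | rfl | rfl | rfl | rfl | rfl :
      i = j ∨ k = l ∨ i = l ∨ i = k ∨ j = l ∨ j = k := by
    decide +revert
  · exact hR.apply_self _ _ _
  · exact hR.apply_self_right _ _ _
  · exact shared _ _ _
  · rw [hR.antisymm_right, shared, neg_zero]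
  · rw [hR.antisymm, shared, neg_zero]
  · rw [hR.swap, shared]

theorem eq_zero_of_ricci_eq_zero (hdim : finrank K V = 3) (hg : g.IsSymm) (hg' : g.Nondegenerate)
    (hR : IsBivectorForm g R) (hRic : ricci R = 0) : R = 0 := by
  have : FiniteDimensional K V := .of_finrank_pos (by lia)
  obtain ⟨e, he⟩ := exists_basis_fin_isOrthoᵢ hdim hg
  refine e.ext fun i ↦ e.ext fun j ↦ e.ext fun k ↦ hg'.1 _ fun W ↦ ?_
  have form_eq_zero : g (R (e i) (e j) (e k)) = 0 :=
    e.ext (hR.apply_basis_eq_zero_of_ricci_eq_zero hg' he hRic i j k)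
  exact LinearMap.congr_fun form_eq_zero W

end IsBivectorForm

theorem eq_kulkarniNomizu_schouten (hdim : finrank K V = 3) {g : BilinForm K V} (hg : g.IsSymm)
    (hg' : g.Nondegenerate) {R : V →ₗ[K] V →ₗ[K] V →ₗ[K] V} (hR : IsBivectorForm g R)
    {S : End K V} (hS : g ∘ₗ S = ricci R) : R = kulkarniNomizu g (schouten S) := by
  have : FiniteDimensional K V := .of_finrank_pos (by lia)
  have hS_selfAdjoint : g.IsSelfAdjoint S := fun X Y ↦ by
    calc g (S X) Y = ricci R X Y := LinearMap.congr_fun₂ hS X Y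
      _ = ricci R Y X := (hR.ricci_isSymm hg hg').eq X Y
      _ = g (S Y) X := (LinearMap.congr_fun₂ hS Y X).symm
      _ = g X (S Y) := hg.eq _ _
  have finrank_eq : (finrank K V : K) = 3 := by simp [hdim]
  have finrank_ne_one : (finrank K V : K) ≠ 1 := fun h ↦
    two_ne_zero (α := K) (by linear_combination h - finrank_eq)
  have finrank_ne_two : (finrank K V : K) ≠ 2 := fun h ↦
    one_ne_zero (α := K) (by linear_combination h - finrank_eq)
  have weyl_ricci_flat : ricci (R - kulkarniNomizu g (schouten S)) = 0 := by
    rw [ricci_sub, ricci_kulkarniNomizu_schouten finrank_ne_one finrank_ne_two, hS]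
    exact sub_self (ricci R)
  have weyl_isBivectorForm := hR.sub
    (isBivectorForm_kulkarniNomizu hg (isSelfAdjoint_schouten hS_selfAdjoint))
  exact sub_eq_zero.mp (weyl_isBivectorForm.eq_zero_of_ricci_eq_zero hdim hg hg' weyl_ricci_flat)

theorem threeDim_curvature_determined_by_ricci_general (hdim : finrank K V = 3)
    {g : BilinForm K V} (hg : g.IsSymm) (hg' : g.Nondegenerate)
    {R : V →ₗ[K] V →ₗ[K] V →ₗ[K] V} (hR : IsBivectorForm g R)
    {S : End K V} (hS : ∀ X Y, g (S X) Y = ricci R X Y) (X Y Z W : V) :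
    g (R X Y Z) W =
      g X W * ricci R Y Z - g X Z * ricci R Y W + g Y Z * ricci R X W - g Y W * ricci R X Z
        - (trace K V S / 2) * (g Y Z * g X W - g X Z * g Y W) := by
  have R_eq : R = kulkarniNomizu g (schouten S) :=
    eq_kulkarniNomizu_schouten hdim hg hg' hR (LinearMap.ext₂ hS)
  have schouten_eq : schouten S = S - (trace K V S / 4) • LinearMap.id := by
    rw [schouten, hdim]
    norm_num
  have half_eq : trace K V S / 2 = 2 * (trace K V S / 4) := by
    have h_two : (2 : K) ≠ 0 := two_ne_zero
    rw [show (4 : K) = 2 * 2 by norm_num]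
    field_simp
  simp only [← hS, half_eq]
  rw [R_eq, schouten_eq]
  simp only [kulkarniNomizu_apply, map_add, map_sub, map_smul, LinearMap.add_apply,
    LinearMap.sub_apply, LinearMap.smul_apply, LinearMap.id_apply, smul_eq_mul]
  ring

end Field

/-- In dimension 3, a curvature-like tensor is determined by its Ricci tensor and
scalar curvature:
`R̃(X,Y,Z,W) = g(X,W)Ric(Y,Z) - g(X,Z)Ric(Y,W) + g(Y,Z)Ric(X,W) - g(Y,W)Ric(X,Z)
  - (τ/2)(g(Y,Z)g(X,W) - g(X,Z)g(Y,W))`. -/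
theorem threeDim_curvature_determined_by_ricci
    {V : Type*} [AddCommGroup V] [Module ℝ V] [FiniteDimensional ℝ V]
    (hdim : Module.finrank ℝ V = 3)
    (g : V →ₗ[ℝ] V →ₗ[ℝ] ℝ)
    (hgsymm : ∀ X Y : V, g X Y = g Y X)
    (hgnd : ∀ X : V, (∀ Y : V, g X Y = 0) → X = 0)
    (R : V →ₗ[ℝ] V →ₗ[ℝ] V →ₗ[ℝ] V)
    (hanti : ∀ X Y Z W : V, g (R X Y Z) W = -(g (R Y X Z) W))
    (hpair : ∀ X Y Z W : V, g (R X Y Z) W = g (R Z W X) Y)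
    (hbianchi : ∀ X Y Z W : V,
      g (R X Y Z) W + g (R Y Z X) W + g (R Z X Y) W = 0)
    (Ric : V → V → ℝ)
    (hRic : ∀ X Y : V, Ric X Y = LinearMap.trace ℝ V ((R.flip X).flip Y))
    (S : V →ₗ[ℝ] V)
    (hS : ∀ X Y : V, g (S X) Y = Ric X Y)
    (τ : ℝ) (hτ : τ = LinearMap.trace ℝ V S) :
    ∀ X Y Z W : V, g (R X Y Z) W =
      g X W * Ric Y Z - g X Z * Ric Y W + g Y Z * Ric X W - g Y W * Ric X Z
        - (τ / 2) * (g Y Z * g X W - g X Z * g Y W) := by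
  subst hτ
  have hg : BilinForm.IsSymm g := ⟨hgsymm⟩
  have hg' : g.Nondegenerate := hg.isRefl.nondegenerate_iff_separatingLeft.mpr hgnd
  simp only [hRic] at hS ⊢
  exact threeDim_curvature_determined_by_ricci_general hdim hg hg' ⟨hanti, hpair⟩ hS
end

section
/- Let V, g, ξ, η, α, τ and R be a pointwise α-para Kenmotsu curvature model, and define Ric(X,Y) := trace of the linear map Z ↦ R(Z,X)Y. Then for all X, Y ∈ V: Ric(X,Y) = (τ/2 − α²) g(X,Y) + (3α² − τ/2) η(X)η(Y). -/
/-!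
Every pair of a bilinear form `h` and an endomorphism `A` yields a curvature-like map
`h ∧ A : (X, Y, Z) ↦ h(Y,Z) AX - h(X,Z) AY`, with Ricci form `tr(A) h(X,Y) - h(AX,Y)`.
With `a = τ/2 - 2α²` and `b = τ/2 - 3α²`, the curvature of the model is
`a (g ∧ id) - b (g ∧ (η ⊗ ξ) + (η ⊗ η) ∧ id)`, and the Ricci form is linear in the curvature.
-/

section RicciForm

variable {K M : Type*} [CommRing K] [AddCommGroup M] [Module K M]

/-- The Ricci form `(X, Y) ↦ tr(Z ↦ R(Z,X)Y)` of an arbitrary trilinear map `R`, written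
`R X Y Z` for `R(X,Y)Z`. -/
noncomputable def ricciForm (R : M →ₗ[K] M →ₗ[K] M →ₗ[K] M) (X Y : M) : K :=
  LinearMap.trace K M ((R.flip X).flip Y)

theorem ricciForm_add (R S : M →ₗ[K] M →ₗ[K] M →ₗ[K] M) (X Y : M) :
    ricciForm (R + S) X Y = ricciForm R X Y + ricciForm S X Y :=
  map_add (LinearMap.trace K M) ((R.flip X).flip Y) ((S.flip X).flip Y)

theorem ricciForm_sub (R S : M →ₗ[K] M →ₗ[K] M →ₗ[K] M) (X Y : M) :
    ricciForm (R - S) X Y = ricciForm R X Y - ricciForm S X Y :=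
  map_sub (LinearMap.trace K M) ((R.flip X).flip Y) ((S.flip X).flip Y)

theorem ricciForm_smul (c : K) (R : M →ₗ[K] M →ₗ[K] M →ₗ[K] M) (X Y : M) :
    ricciForm (c • R) X Y = c * ricciForm R X Y :=
  map_smul (LinearMap.trace K M) c ((R.flip X).flip Y)

/-- The curvature-like map `h ∧ A : (X, Y, Z) ↦ h(Y,Z) AX - h(X,Z) AY`. For `h = g` and `A = id` it
is the curvature of constant sectional curvature one; for `A` dual to a symmetric form `k`,
the Kulkarni–Nomizu product of `h` and `k` is the sum of two such maps. -/
def curvatureWedge (h : M →ₗ[K] M →ₗ[K] K) (A : M →ₗ[K] M) : M →ₗ[K] M →ₗ[K] M →ₗ[K] M :=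
  (LinearMap.smulRightₗ.compl₁₂ h A).flip - LinearMap.smulRightₗ.compl₁₂ h A

theorem curvatureWedge_apply (h : M →ₗ[K] M →ₗ[K] K) (A : M →ₗ[K] M) (X Y Z : M) :
    curvatureWedge h A X Y Z = h Y Z • A X - h X Z • A Y :=
  rfl

variable [Module.Free K M] [Module.Finite K M]

theorem ricciForm_curvatureWedge (h : M →ₗ[K] M →ₗ[K] K) (A : M →ₗ[K] M) (X Y : M) :
    ricciForm (curvatureWedge h A) X Y = LinearMap.trace K M A * h X Y - h (A X) Y := by
  have contraction : ((curvatureWedge h A).flip X).flip Y =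
      h X Y • A - (h.flip Y).smulRight (A X) := rfl
  rw [ricciForm, contraction, map_sub, map_smul, LinearMap.trace_smulRight,
    LinearMap.flip_apply, smul_eq_mul, mul_comm]

theorem ricciForm_curvatureWedge_id (h : M →ₗ[K] M →ₗ[K] K) (X Y : M) :
    ricciForm (curvatureWedge h LinearMap.id) X Y = (Module.finrank K M - 1) * h X Y := by
  rw [ricciForm_curvatureWedge, LinearMap.trace_id, LinearMap.id_apply]
  ring

theorem ricciForm_curvatureWedge_smulRight (h : M →ₗ[K] M →ₗ[K] K) (η : M →ₗ[K] K) (ξ X Y : M) :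
    ricciForm (curvatureWedge h (η.smulRight ξ)) X Y = η ξ * h X Y - η X * h ξ Y := by
  rw [ricciForm_curvatureWedge, LinearMap.trace_smulRight, LinearMap.smulRight_apply, map_smul,
    LinearMap.smul_apply, smul_eq_mul]

theorem pointwise_model_ricci_general
    (g : M →ₗ[K] M →ₗ[K] K) (ξ : M) (hξ : g ξ ξ = 1)
    (η : M → K) (hη : ∀ X : M, η X = g ξ X) (a b : K)
    (R : M →ₗ[K] M →ₗ[K] M →ₗ[K] M)
    (hR : ∀ X Y Z : M, R X Y Z =
      a • (g Y Z • X - g X Z • Y) - (b * (g Y Z * η X - g X Z * η Y)) • ξ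
        + (b * η Z) • (η X • Y - η Y • X))
    (X Y : M) :
    ricciForm R X Y =
      ((Module.finrank K M - 1) * a - b) * g X Y
        - (Module.finrank K M - 2) * b * (η X * η Y) := by
  have decomposition : R = a • curvatureWedge g LinearMap.id
      - b • (curvatureWedge g ((g ξ).smulRight ξ)
        + curvatureWedge ((g ξ).smulRight (g ξ)) LinearMap.id) := by
    ext X Y Z
    simp only [hR, hη, curvatureWedge_apply, LinearMap.add_apply, LinearMap.sub_apply,
      LinearMap.smul_apply, LinearMap.smulRight_apply, LinearMap.id_apply, smul_eq_mul]
    module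
  simp only [decomposition, ricciForm_sub, ricciForm_add, ricciForm_smul,
    ricciForm_curvatureWedge_id, ricciForm_curvatureWedge_smulRight, LinearMap.smulRight_apply,
    LinearMap.smul_apply, smul_eq_mul, hξ, hη]
  ring

end RicciForm

/-- In a pointwise α-para Kenmotsu curvature model, `Ric(X,Y) = (τ/2 - α²)g(X,Y) + (3α² - τ/2)η(X)η(Y)`. -/
theorem pointwise_model_ricci
    {V : Type*} [AddCommGroup V] [Module ℝ V] [FiniteDimensional ℝ V]
    (hdim : Module.finrank ℝ V = 3)
    (g : V →ₗ[ℝ] V →ₗ[ℝ] ℝ)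
    (hgsymm : ∀ X Y : V, g X Y = g Y X)
    (ξ : V) (hξ : g ξ ξ = 1)
    (η : V → ℝ) (hη : ∀ X : V, η X = g X ξ)
    (α τ : ℝ)
    (R : V →ₗ[ℝ] V →ₗ[ℝ] V →ₗ[ℝ] V)
    (hR : ∀ X Y Z : V, R X Y Z =
      (τ / 2 - 2 * α ^ 2) • (g Y Z • X - g X Z • Y)
        - ((τ / 2 - 3 * α ^ 2) * (g Y Z * η X - g X Z * η Y)) • ξ
        + ((τ / 2 - 3 * α ^ 2) * η Z) • (η X • Y - η Y • X))
    (Ric : V → V → ℝ)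
    (hRic : ∀ X Y : V, Ric X Y = LinearMap.trace ℝ V ((R.flip X).flip Y))
    : ∀ X Y : V, Ric X Y = (τ / 2 - α ^ 2) * g X Y + (3 * α ^ 2 - τ / 2) * (η X * η Y) := by
  intro X Y
  rw [hRic, ← ricciForm, pointwise_model_ricci_general g ξ hξ η
    (fun Z ↦ (hη Z).trans (hgsymm Z ξ)) _ _ R hR, hdim]
  push_cast
  ring
end

section
/- Let V, g, ξ, η, α, τ and R be a pointwise α-para Kenmotsu curvature model, and let L be the associated concircular curvature tensor, L(X,Y)Z := R(X,Y)Z − (τ/6)(g(Y,Z)X − g(X,Z)Y). Then L(X,Y)ξ = 0 for all X, Y ∈ V if and only if τ = 6α². (An α-para Kenmotsu 3-manifold is ξ-concircularly flat if and only if its scalar curvature equals 6α².) -/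
/-!
Contracting the curvature with `ξ` collapses the model to `R(X,Y)ξ = α² (η(Y)X - η(X)Y)`, so that
`L(X,Y)ξ = (α² - τ/6) (η(Y)X - η(X)Y)`. Taking `Y = ξ`, the last factor is `X - η(X)ξ`, which
vanishes for every `X` only if `ξ` spans `V`.
-/

section

variable {K V : Type*} [Field K] [AddCommGroup V] [Module K V]

/-- The endomorphism `X ∧ Y : Z ↦ g(Y,Z)X - g(X,Z)Y`, the curvature tensor of constant sectional
curvature one. -/
def metricWedge (g : LinearMap.BilinForm K V) (X Y Z : V) : V :=
  g Y Z • X - g X Z • Y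

/-- The concircular curvature tensor `R(X,Y)Z - τ/(n(n-1)) (X ∧ Y)Z` of a curvature map `R` with
scalar curvature `τ`, with the coefficient `τ/6` of dimension `n = 3`. -/
def concircularCurvature (g : LinearMap.BilinForm K V) (τ : K) (R : V → V → V → V)
    (X Y Z : V) : V :=
  R X Y Z - (τ / 6) • metricWedge g X Y Z

/-- The curvature tensor of a three-dimensional `α`-para Kenmotsu manifold at a point, with
characteristic vector `ξ` and scalar curvature `τ`; the contact form `η` is written out as
`g(·, ξ)`. -/
def paraKenmotsuCurvature (g : LinearMap.BilinForm K V) (ξ : V) (α τ : K) (X Y Z : V) : V :=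
  (τ / 2 - 2 * α ^ 2) • metricWedge g X Y Z
    - ((τ / 2 - 3 * α ^ 2) * (g Y Z * g X ξ - g X Z * g Y ξ)) • ξ
    + ((τ / 2 - 3 * α ^ 2) * g Z ξ) • (g X ξ • Y - g Y ξ • X)

theorem exists_metricWedge_ne_zero (hV : 1 < Module.rank K V) {g : LinearMap.BilinForm K V}
    {Y Z : V} (hYZ : g Y Z ≠ 0) : ∃ X, metricWedge g X Y Z ≠ 0 := by
  by_contra! hzero
  refine hV.not_ge (rank_le_one_iff.mpr ⟨Y, fun X ↦ ⟨(g Y Z)⁻¹ * g X Z, ?_⟩⟩)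
  have hX : g Y Z • X = g X Z • Y := sub_eq_zero.mp (hzero X)
  rw [mul_smul, ← hX, inv_smul_smul₀ hYZ]

theorem concircularCurvature_eq_smul_metricWedge {g : LinearMap.BilinForm K V}
    {R : V → V → V → V} {k : K} {X Y Z : V} (hR : R X Y Z = k • metricWedge g X Y Z) (τ : K) :
    concircularCurvature g τ R X Y Z = (k - τ / 6) • metricWedge g X Y Z := by
  rw [concircularCurvature, hR, sub_smul]

theorem forall_concircularCurvature_eq_zero_iff (h6 : (6 : K) ≠ 0) (hV : 1 < Module.rank K V)
    {g : LinearMap.BilinForm K V} {R : V → V → V → V} {k : K} {W Z : V} (hWZ : g W Z ≠ 0)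
    (hR : ∀ X Y, R X Y Z = k • metricWedge g X Y Z) (τ : K) :
    (∀ X Y, concircularCurvature g τ R X Y Z = 0) ↔ τ = 6 * k := by
  simp only [concircularCurvature_eq_smul_metricWedge (hR _ _)]
  calc (∀ X Y, (k - τ / 6) • metricWedge g X Y Z = 0)
    _ ↔ k - τ / 6 = 0 := by
      obtain ⟨X, hX⟩ := exists_metricWedge_ne_zero hV hWZ
      exact ⟨fun hflat ↦ (smul_eq_zero.mp (hflat X W)).resolve_right hX,
        fun hcoeff X Y ↦ by rw [hcoeff, zero_smul]⟩
    _ ↔ τ = 6 * k := by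
      rw [sub_eq_zero, eq_div_iff h6, mul_comm, eq_comm]

theorem paraKenmotsuCurvature_apply_self {g : LinearMap.BilinForm K V} {ξ : V} (hξ : g ξ ξ = 1)
    (α τ : K) (X Y : V) :
    paraKenmotsuCurvature g ξ α τ X Y ξ = α ^ 2 • metricWedge g X Y ξ := by
  simp only [paraKenmotsuCurvature, metricWedge, hξ]
  module

theorem pointwise_model_xi_concircularly_flat_iff_general (h6 : (6 : K) ≠ 0)
    (hV : 1 < Module.rank K V) {g : LinearMap.BilinForm K V} {ξ : V} (hξ : g ξ ξ = 1) (α τ : K) :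
    (∀ X Y, concircularCurvature g τ (paraKenmotsuCurvature g ξ α τ) X Y ξ = 0) ↔
      τ = 6 * α ^ 2 :=
  forall_concircularCurvature_eq_zero_iff h6 hV (hξ ▸ one_ne_zero)
    (paraKenmotsuCurvature_apply_self hξ α τ) τ

end

/-- A pointwise α-para Kenmotsu curvature model is ξ-concircularly flat, i.e. `L(X,Y)ξ = 0` for all `X, Y`, if and only if `τ = 6α²`. -/
theorem pointwise_model_xi_concircularly_flat_iff
    {V : Type*} [AddCommGroup V] [Module ℝ V] [FiniteDimensional ℝ V]
    (hdim : Module.finrank ℝ V = 3)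
    (g : V →ₗ[ℝ] V →ₗ[ℝ] ℝ)
    (hgsymm : ∀ X Y : V, g X Y = g Y X)
    (ξ : V) (hξ : g ξ ξ = 1)
    (η : V → ℝ) (hη : ∀ X : V, η X = g X ξ)
    (α τ : ℝ)
    (R : V →ₗ[ℝ] V →ₗ[ℝ] V →ₗ[ℝ] V)
    (hR : ∀ X Y Z : V, R X Y Z =
      (τ / 2 - 2 * α ^ 2) • (g Y Z • X - g X Z • Y)
        - ((τ / 2 - 3 * α ^ 2) * (g Y Z * η X - g X Z * η Y)) • ξ
        + ((τ / 2 - 3 * α ^ 2) * η Z) • (η X • Y - η Y • X))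
    (L : V → V → V → V)
    (hL : ∀ X Y Z : V, L X Y Z = R X Y Z - (τ / 6) • (g Y Z • X - g X Z • Y))
    : (∀ X Y : V, L X Y ξ = 0) ↔ τ = 6 * α ^ 2 := by
  obtain rfl : L = concircularCurvature g τ (paraKenmotsuCurvature g ξ α τ) := by
    funext X Y Z
    simp only [hL, hR, hη, concircularCurvature, paraKenmotsuCurvature, metricWedge]
  exact pointwise_model_xi_concircularly_flat_iff_general (by norm_num)
    (Module.one_lt_rank_of_one_lt_finrank (by lia)) hξ α τ
end

section
/- Let V, g, ξ, η, α, τ and R be a pointwise α-para Kenmotsu curvature model with α ≠ 0, and let h be a symmetric bilinear form on V satisfying the parallel-tensor curvature condition h(R(Z,X)Y, W) + h(Y, R(Z,X)W) = 0 for all X, Y, Z, W ∈ V. Then h(X, ξ) = η(X) h(ξ, ξ) for all X ∈ V. (This is the key algebraic step in the proof that a second order parallel tensor on an α-para Kenmotsu 3-manifold is a constant multiple of the metric.) -/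
/-!
Taking both remaining arguments equal to `ξ` turns the curvature condition into
`h (R(ξ, X)ξ, ξ) = 0`, because an operator that is skew for a symmetric form sends every vector to
one orthogonal to it. Since `R(ξ, X)ξ = α² (η(X) ξ - X)`, this says that the component of `X` along
`ker η` is `h`-orthogonal to `ξ`.
-/

section Skew

variable {K V : Type*} [CommRing K] [NoZeroDivisors K] [NeZero (2 : K)]
  [AddCommGroup V] [Module K V]

theorem apply_self_eq_zero_of_isSkewAdjoint {h : LinearMap.BilinForm K V} (hsymm : h.IsSymm)
    {f : V → V} (hf : h.IsSkewAdjoint f) (x : V) : h (f x) x = 0 := by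
  have h_skew : h (f x) x = -h (f x) x := by
    simpa only [Pi.neg_apply, map_neg, hsymm.eq x (f x)] using hf x x
  have h_double : 2 * h (f x) x = 0 := by linear_combination h_skew
  exact (mul_eq_zero.mp h_double).resolve_left two_ne_zero

end Skew

section Curvature

variable {K V : Type*} [CommRing K] [AddCommGroup V] [Module K V]

/-- The algebraic curvature of quasi-constant curvature determined by a form `g`, a vector `ξ` and
two scalars, with the functional `η` written out as `g · ξ`. The `α`-para Kenmotsu curvature
`R(X, Y)Z` is the case `a = τ / 2 - 2 * α ^ 2`, `b = τ / 2 - 3 * α ^ 2`. -/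
def quasiConstantCurvature (g : LinearMap.BilinForm K V) (ξ : V) (a b : K) (X Y Z : V) : V :=
  a • (g Y Z • X - g X Z • Y) - (b * (g Y Z * g X ξ - g X Z * g Y ξ)) • ξ
    + (b * g Z ξ) • (g X ξ • Y - g Y ξ • X)

theorem quasiConstantCurvature_self_apply_self {g : LinearMap.BilinForm K V} {ξ : V}
    (hξ : g ξ ξ = 1) (a b : K) (X : V) :
    quasiConstantCurvature g ξ a b ξ X ξ = (a - b) • (g X ξ • ξ - X) := by
  rw [quasiConstantCurvature, hξ]
  module

end Curvature

theorem pointwise_model_parallel_tensor_step_general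
    {K V : Type*} [CommRing K] [NoZeroDivisors K] [NeZero (2 : K)] [AddCommGroup V] [Module K V]
    {g : LinearMap.BilinForm K V} {ξ : V} (hξ : g ξ ξ = 1) {a b : K} (hab : a ≠ b)
    {h : LinearMap.BilinForm K V} (hsymm : h.IsSymm)
    (hskew : ∀ X, h.IsSkewAdjoint (quasiConstantCurvature g ξ a b ξ X)) (X : V) :
    h X ξ = g X ξ * h ξ ξ := by
  have h_orth : (a - b) * (g X ξ * h ξ ξ - h X ξ) = 0 := by
    simpa only [quasiConstantCurvature_self_apply_self hξ, map_smul, map_sub, LinearMap.smul_apply,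
      LinearMap.sub_apply, smul_eq_mul] using apply_self_eq_zero_of_isSkewAdjoint hsymm (hskew X) ξ
  exact (sub_eq_zero.mp ((mul_eq_zero.mp h_orth).resolve_left (sub_ne_zero.mpr hab))).symm

/-- If `α ≠ 0` and a symmetric bilinear form `h` satisfies the parallel-tensor curvature condition on a pointwise α-para Kenmotsu curvature model, then `h(X,ξ) = η(X)h(ξ,ξ)`. -/
theorem pointwise_model_parallel_tensor_step
    {V : Type*} [AddCommGroup V] [Module ℝ V] [FiniteDimensional ℝ V]
    (hdim : Module.finrank ℝ V = 3)
    (g : V →ₗ[ℝ] V →ₗ[ℝ] ℝ)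
    (hgsymm : ∀ X Y : V, g X Y = g Y X)
    (ξ : V) (hξ : g ξ ξ = 1)
    (η : V → ℝ) (hη : ∀ X : V, η X = g X ξ)
    (α τ : ℝ)
    (R : V →ₗ[ℝ] V →ₗ[ℝ] V →ₗ[ℝ] V)
    (hR : ∀ X Y Z : V, R X Y Z =
      (τ / 2 - 2 * α ^ 2) • (g Y Z • X - g X Z • Y)
        - ((τ / 2 - 3 * α ^ 2) * (g Y Z * η X - g X Z * η Y)) • ξ
        + ((τ / 2 - 3 * α ^ 2) * η Z) • (η X • Y - η Y • X))
    (hα : α ≠ 0)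
    (h : V →ₗ[ℝ] V →ₗ[ℝ] ℝ)
    (hsymm : ∀ X Y : V, h X Y = h Y X)
    (hpar : ∀ X Y Z W : V, h (R Z X Y) W + h Y (R Z X W) = 0)
    : ∀ X : V, h X ξ = η X * h ξ ξ := by
  obtain rfl : η = (g · ξ) := funext hη
  have h_coeff : τ / 2 - 2 * α ^ 2 ≠ τ / 2 - 3 * α ^ 2 := fun h_eq ↦
    pow_ne_zero 2 hα (by linear_combination h_eq)
  refine pointwise_model_parallel_tensor_step_general hξ h_coeff ⟨hsymm⟩ fun X Y W ↦ ?_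
  simpa only [hR, Pi.neg_apply, map_neg, quasiConstantCurvature, eq_neg_iff_add_eq_zero]
    using hpar X Y ξ W
end

section
/- Let V, g, ξ, η, α, τ and R be a pointwise α-para Kenmotsu curvature model, define Ric(X,Y) := trace of the linear map Z ↦ R(Z,X)Y, and let P be the associated projective curvature tensor, P(X,Y)Z := R(X,Y)Z − (1/2)(Ric(Y,Z)X − Ric(X,Z)Y). Then P(X,Y)ξ = 0 for all X, Y ∈ V. (An α-para Kenmotsu 3-manifold is ξ-projectively flat.) -/
/-!
At `Z = ξ` the curvature of the model collapses to `R(X,Y)ξ = κ (η(Y) X - η(X) Y)`. For fixed `X`,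
the endomorphism `Z ↦ η(X) Z - η(Z) X` has trace `(n - 1) η(X)`, so `Ric(X,ξ) = (n - 1) κ η(X)`, and
the Ricci term of the projective curvature tensor cancels `R(X,Y)ξ` in every dimension `n`.
-/

section CommRing

variable {A M : Type*} [CommRing A] [AddCommGroup M] [Module A M]

/-- The Ricci tensor `Ric(X,Y) = tr (Z ↦ R(Z,X)Y)` of a trilinear curvature map `R`. -/
noncomputable def ricciTensor (R : M →ₗ[A] M →ₗ[A] M →ₗ[A] M) (X Y : M) : A :=
  LinearMap.trace A M ((R.flip X).flip Y)

/-- The `κ`-nullity condition at `ξ`: the curvature map `R` satisfies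
`R(X,Y)ξ = κ (η(Y) X - η(X) Y)`. In geometry `η` is the metric dual of `ξ`; here it may be any
linear functional. -/
def IsNullityVector (R : M →ₗ[A] M →ₗ[A] M →ₗ[A] M) (κ : A) (η : Module.Dual A M) (ξ : M) : Prop :=
  ∀ X Y : M, R X Y ξ = κ • (η Y • X - η X • Y)

theorem trace_smul_id_sub_smulRight [Module.Free A M] [Module.Finite A M]
    (f : Module.Dual A M) (x : M) :
    LinearMap.trace A M (f x • LinearMap.id - f.smulRight x) = (Module.finrank A M - 1) * f x := by
  rw [map_sub, map_smul, LinearMap.trace_id, LinearMap.trace_smulRight, smul_eq_mul]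
  ring

theorem IsNullityVector.ricciTensor_eq [Module.Free A M] [Module.Finite A M]
    {R : M →ₗ[A] M →ₗ[A] M →ₗ[A] M} {κ : A} {η : Module.Dual A M} {ξ : M}
    (h : IsNullityVector R κ η ξ) (X : M) :
    ricciTensor R X ξ = κ * ((Module.finrank A M - 1) * η X) := by
  have contraction : (R.flip X).flip ξ = κ • (η X • LinearMap.id - η.smulRight X) :=
    LinearMap.ext fun Z => h Z X
  rw [ricciTensor, contraction, map_smul, trace_smul_id_sub_smulRight, smul_eq_mul]

theorem isNullityVector_of_curvature_eq (g : M →ₗ[A] M →ₗ[A] A) {ξ : M} (hξ : g ξ ξ = 1)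
    {η : M → A} (hη : ∀ X, η X = g X ξ) {a b : A} {R : M →ₗ[A] M →ₗ[A] M →ₗ[A] M}
    (hR : ∀ X Y Z : M, R X Y Z =
      a • (g Y Z • X - g X Z • Y) - (b * (g Y Z * η X - g X Z * η Y)) • ξ
        + (b * η Z) • (η X • Y - η Y • X)) :
    IsNullityVector R (a - b) (g.flip ξ) ξ := by
  intro X Y
  simp only [hR, hη, hξ, LinearMap.flip_apply]
  module

end CommRing

section Field

variable {K V : Type*} [Field K] [AddCommGroup V] [Module K V]

/-- The projective curvature tensor
`P(X,Y)Z = R(X,Y)Z - (n - 1)⁻¹ (Ric(Y,Z) X - Ric(X,Z) Y)` in dimension `n`. When `n = 1` in `K`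
the inverse is `0`, so that `P = R`. -/
noncomputable def projectiveCurvature (R : V →ₗ[K] V →ₗ[K] V →ₗ[K] V) (X Y Z : V) : V :=
  R X Y Z - (Module.finrank K V - 1 : K)⁻¹ • (ricciTensor R Y Z • X - ricciTensor R X Z • Y)

theorem IsNullityVector.projectiveCurvature_eq_zero [FiniteDimensional K V]
    (hdim : (Module.finrank K V : K) ≠ 1)
    {R : V →ₗ[K] V →ₗ[K] V →ₗ[K] V} {κ : K} {η : Module.Dual K V} {ξ : V}
    (h : IsNullityVector R κ η ξ) (X Y : V) : projectiveCurvature R X Y ξ = 0 := by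
  have hn : (Module.finrank K V - 1 : K) ≠ 0 := sub_ne_zero.mpr hdim
  have ricci_term (W : V) : (Module.finrank K V - 1 : K)⁻¹ * ricciTensor R W ξ = κ * η W := by
    rw [h.ricciTensor_eq, mul_left_comm, inv_mul_cancel_left₀ hn]
  rw [projectiveCurvature, smul_sub, smul_smul, smul_smul, ricci_term, ricci_term, h X Y,
    smul_sub, smul_smul, smul_smul, sub_self]

theorem pointwise_model_xi_projectively_flat_general [FiniteDimensional K V]
    (hdim : (Module.finrank K V : K) ≠ 1) (g : V →ₗ[K] V →ₗ[K] K) {ξ : V} (hξ : g ξ ξ = 1)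
    {η : V → K} (hη : ∀ X, η X = g X ξ) {a b : K} {R : V →ₗ[K] V →ₗ[K] V →ₗ[K] V}
    (hR : ∀ X Y Z : V, R X Y Z =
      a • (g Y Z • X - g X Z • Y) - (b * (g Y Z * η X - g X Z * η Y)) • ξ
        + (b * η Z) • (η X • Y - η Y • X))
    (X Y : V) : projectiveCurvature R X Y ξ = 0 :=
  (isNullityVector_of_curvature_eq g hξ hη hR).projectiveCurvature_eq_zero hdim X Y

end Field

/-- A pointwise α-para Kenmotsu curvature model is ξ-projectively flat: `P(X,Y)ξ = 0`. -/
theorem pointwise_model_xi_projectively_flat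
    {V : Type*} [AddCommGroup V] [Module ℝ V] [FiniteDimensional ℝ V]
    (hdim : Module.finrank ℝ V = 3)
    (g : V →ₗ[ℝ] V →ₗ[ℝ] ℝ)
    (hgsymm : ∀ X Y : V, g X Y = g Y X)
    (ξ : V) (hξ : g ξ ξ = 1)
    (η : V → ℝ) (hη : ∀ X : V, η X = g X ξ)
    (α τ : ℝ)
    (R : V →ₗ[ℝ] V →ₗ[ℝ] V →ₗ[ℝ] V)
    (hR : ∀ X Y Z : V, R X Y Z =
      (τ / 2 - 2 * α ^ 2) • (g Y Z • X - g X Z • Y)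
        - ((τ / 2 - 3 * α ^ 2) * (g Y Z * η X - g X Z * η Y)) • ξ
        + ((τ / 2 - 3 * α ^ 2) * η Z) • (η X • Y - η Y • X))
    (Ric : V → V → ℝ)
    (hRic : ∀ X Y : V, Ric X Y = LinearMap.trace ℝ V ((R.flip X).flip Y))
    (P : V → V → V → V)
    (hP : ∀ X Y Z : V, P X Y Z =
      R X Y Z - (1 / 2 : ℝ) • (Ric Y Z • X - Ric X Z • Y))
    : ∀ X Y : V, P X Y ξ = 0 := by
  have hn : (3 - 1 : ℝ)⁻¹ = 1 / 2 := by norm_num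
  simpa [projectiveCurvature, ricciTensor, hdim, hn, hP, hRic] using
    pointwise_model_xi_projectively_flat_general (by norm_num [hdim]) g hξ hη hR
end
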